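/- Let d be an odd integer with 1 ≤ d ≤ 2l−1 and d ≠ l, and let w be an integer with γ^w = 2 in F_q (w = ind_γ 2). Then there exist rational integers a_3, …, a_l and b_3, …, b_l such that J_{2l²}(1, dl) ≡ −ζ_{l²}^{−w(dl+1)}·(−1 + Σ_{i=3}^{l} a_i (ζ_{l²} − 1)^i)·(−1 + Σ_{i=3}^{l} b_i (ζ_{l²}^{(−1−dl)/2} − 1)^i) (mod (1−ζ_{l²})^{l+1}). -/

import Mathlib

open Complex Finset

/-- The `i`-th power character: `χ^i(v) = χ(v)^i` for `v ≠ 0`, with the convention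
`χ^i(0) = 0` (in particular `χ^0(0) = 0`). -/
noncomputable def charPow {F : Type*} [DecidableEq F] [Zero F] (χ : F → ℂ) (i : ℤ) (v : F) : ℂ :=
  if v = 0 then 0 else χ v ^ i

/-- The Jacobi sum `J_e(i,j) = ∑_{v ∈ F_q} χ_e^i(v) χ_e^j(v+1)`. -/
noncomputable def jSum {F : Type*} [Field F] [Fintype F] [DecidableEq F]
    (χ : F → ℂ) (i j : ℤ) : ℂ :=
  ∑ v : F, charPow χ i v * charPow χ j (v + 1)

/-!
Write `n = l ^ 2`, let `z` be a primitive `n`-th root of unity, `χ` of order `2 * n` and `d` odd.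
The quotient of `χ ^ (d * l)` by the quadratic character `ρ = χ ^ n` is the `l`-th power of a
character of order dividing `n`, so its values are congruent to `1` modulo `(z - 1) ^ l`, and
`χ ^ (d * l)` may be replaced by `ρ`. With `φ = χ * ρ`, of order `n`, the substitution `x ↦ x⁻¹`
and a count of square roots give `χ (-1) * J(χ, ρ) = χ⁻¹ 4 * J(φ⁻¹, φ⁻¹)`, and for every nontrivial
`φ` with `φ ^ n = 1`
`J(φ, φ) - φ (-1) + 2 * q = ∑ x, (φ x - 1) * (φ (1 - x) - 1) ^ 2 * φ⁻¹ (1 - x)`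
is divisible by `(z - 1) ^ 3`. As `q ≡ 1` and `φ (-1) = 1`, the Jacobi sum is congruent to
`-χ 4 ^ (-(d * l + 1))` modulo `(z - 1) ^ 3`. Dividing by the unit `χ 4 ^ (-(d * l + 1))` and
expanding in powers of `z - 1` in `ℤ[z]` yields the coefficients `a i`; all the `b i` can be taken
to be `0`.
-/

section RootsOfUnity

variable {R : Type*} [CommRing R] [IsDomain R]

lemma sub_one_pow_dvd_pow_sub_one_of_isPrimitiveRoot {m n : ℕ} (hmn : 0 < m * n) {z : R}
    (hz : IsPrimitiveRoot z (m * n)) : (z - 1) ^ n ∣ z ^ n - 1 := by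
  have hn : 0 < n := pos_of_mul_pos_right hmn m.zero_le
  have hω : IsPrimitiveRoot (z ^ m) n := hz.pow hmn rfl
  have : NeZero n := ⟨hn.ne'⟩
  have hprod : 1 - z ^ n = ∏ ω ∈ Polynomial.nthRootsFinset n (1 : R), (1 - ω * z) := by
    rw [← hω.pow_sub_pow_eq_prod_sub_mul 1 z hn, one_pow]
  have hpow : (z - 1) ^ n = ∏ _ω ∈ Polynomial.nthRootsFinset n (1 : R), (z - 1) := by
    rw [prod_const, hω.card_nthRootsFinset]
  rw [dvd_sub_comm, hprod, hpow]
  refine prod_dvd_prod_of_dvd (fun _ ↦ z - 1) _ fun ω hω_mem ↦ ?_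
  obtain ⟨i, -, rfl⟩ := hω.eq_pow_of_pow_eq_one ((Polynomial.mem_nthRootsFinset hn _).1 hω_mem)
  rw [dvd_sub_comm, ← pow_mul, ← pow_succ]
  exact sub_one_dvd_pow_sub_one z _

lemma mem_adjoin_of_pow_two_mul_eq_one {n : ℕ} (hn : Odd n) {z : R} (hz : IsPrimitiveRoot z n)
    {y : R} (hy : y ^ (2 * n) = 1) : y ∈ Algebra.adjoin ℤ {z} := by
  have : NeZero n := ⟨hn.pos.ne'⟩
  have hzmem (k : ℕ) : z ^ k ∈ Algebra.adjoin ℤ {z} :=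
    pow_mem (Algebra.self_mem_adjoin_singleton ℤ z) k
  rw [mul_comm, pow_mul, sq_eq_one_iff] at hy
  rcases hy with hy | hy
  · obtain ⟨k, -, rfl⟩ := hz.eq_pow_of_pow_eq_one hy
    exact hzmem k
  · obtain ⟨k, -, hk⟩ := hz.eq_pow_of_pow_eq_one (ξ := -y) (by rw [hn.neg_pow, hy, neg_neg])
    rw [← neg_neg y, ← hk]
    exact neg_mem (hzmem k)

end RootsOfUnity

section PolynomialExpansion

open Polynomial

lemma X_pow_dvd_sub_sum_Icc_coeff {A : Type*} [CommRing A] {m n : ℕ} {P : A[X]} (hP : X ^ m ∣ P) :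
    X ^ (n + 1) ∣ P - ∑ i ∈ Icc m n, C (P.coeff i) * X ^ i := by
  rw [X_pow_dvd_iff]
  intro k hk
  simp only [coeff_sub, finsetSum_coeff, coeff_C_mul_X_pow, sum_ite_eq, mem_Icc]
  split_ifs with h
  · exact sub_self _
  · rw [sub_zero, X_pow_dvd_iff.1 hP k (by lia)]

lemma exists_pow_dvd_sub_sum_Icc {A S : Type*} [CommRing A] [CommRing S] [Algebra A S] {π : S}
    (hπ : Algebra.adjoin A {π} = ⊤) {m : ℕ} {u : S} (hu : π ^ m ∣ u) (n : ℕ) :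
    ∃ a : ℕ → A, π ^ (n + 1) ∣ u - ∑ i ∈ Icc m n, algebraMap A S (a i) * π ^ i := by
  obtain ⟨y, rfl⟩ := hu
  obtain ⟨Q, rfl⟩ : ∃ Q : A[X], aeval π Q = y := by
    rw [← AlgHom.mem_range, ← Algebra.adjoin_singleton_eq_range_aeval, hπ]
    exact Algebra.mem_top
  have h := map_dvd (aeval π) (X_pow_dvd_sub_sum_Icc_coeff (n := n) (dvd_mul_right (X ^ m) Q))
  exact ⟨fun i ↦ (X ^ m * Q).coeff i, by simpa using h⟩

lemma adjoin_sub_one_eq_top {A S : Type*} [CommRing A] [CommRing S] [Algebra A S] {z : S}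
    (hz : Algebra.adjoin A {z} = ⊤) : Algebra.adjoin A {z - 1} = ⊤ := by
  rw [← top_le_iff, ← hz]
  refine Algebra.adjoin_le (Set.singleton_subset_iff.2 ?_)
  simpa using add_mem (Algebra.self_mem_adjoin_singleton A (z - 1)) (one_mem _)

end PolynomialExpansion

section JacobiSum

variable {F R : Type*} [Field F] [Fintype F] [CommRing R]

lemma dvd_jacobiSum_mul_sub_jacobiSum (χ ψ : MulChar F R) {θ : MulChar F R} {c : R}
    (hθ : ∀ x, x ≠ 0 → c ∣ θ x - 1) : c ∣ jacobiSum χ (ψ * θ) - jacobiSum χ ψ := by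
  simp only [jacobiSum, ← sum_sub_distrib, MulChar.mul_apply]
  refine dvd_sum fun x _ ↦ ?_
  rcases eq_or_ne (1 - x) 0 with hx | hx
  · simp [hx, MulChar.map_zero]
  · rw [show χ x * (ψ (1 - x) * θ (1 - x)) - χ x * ψ (1 - x)
      = χ x * ψ (1 - x) * (θ (1 - x) - 1) by ring]
    exact (hθ _ hx).mul_left _

lemma jacobiSum_eq_mul_jacobiSum_inv_mul (χ ψ : MulChar F R) :
    jacobiSum χ ψ = ψ (-1) * jacobiSum (χ * ψ)⁻¹ ψ := by
  rw [jacobiSum, ← inv_involutive.bijective.sum_comp, jacobiSum, mul_sum]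
  refine sum_congr rfl fun x _ ↦ ?_
  rcases eq_or_ne x 0 with rfl | hx
  · simp [MulChar.map_zero]
  · have h : 1 - x⁻¹ = -1 * ((1 - x) * x⁻¹) := by field_simp; ring
    rw [MulChar.inv_apply', MulChar.mul_apply, h, map_mul, map_mul]
    ring

variable [IsDomain R]

lemma sum_apply_one_sub_eq_zero {ψ : MulChar F R} (hψ : ψ ≠ 1) : ∑ x, ψ (1 - x) = 0 :=
  ((Equiv.subLeft 1).sum_comp ψ).trans (MulChar.sum_eq_zero_of_ne_one hψ)

lemma pow_three_dvd_jacobiSum_self_sub {φ : MulChar F R} (hφ : φ ≠ 1) {c : R}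
    (hc : ∀ x, x ≠ 0 → c ∣ φ x - 1) :
    c ^ 3 ∣ jacobiSum φ φ - (φ (-1) - 2 * Fintype.card F) := by
  have hexpand : jacobiSum φ φ - (φ (-1) - 2 * Fintype.card F) =
      ∑ x, (φ x - 1) * (φ (1 - x) + φ⁻¹ (1 - x) - 2) := by
    calc jacobiSum φ φ - (φ (-1) - 2 * Fintype.card F)
      _ = jacobiSum φ φ + jacobiSum φ φ⁻¹ - 2 * ∑ x, φ x - ∑ x, φ (1 - x)
          - ∑ x, φ⁻¹ (1 - x) + ∑ _x : F, 2 := by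
        rw [jacobiSum_nontrivial_inv hφ, MulChar.sum_eq_zero_of_ne_one hφ,
          sum_apply_one_sub_eq_zero hφ, sum_apply_one_sub_eq_zero (inv_ne_one.2 hφ), sum_const,
          card_univ, nsmul_eq_mul]
        ring
      _ = _ := by
        simp only [jacobiSum, mul_sum, ← sum_add_distrib, ← sum_sub_distrib]
        exact sum_congr rfl fun x _ ↦ by ring
  rw [hexpand]
  refine dvd_sum fun x _ ↦ ?_
  rcases eq_or_ne x 0 with rfl | hx
  · simp [one_add_one_eq_two]
  rcases eq_or_ne (1 - x) 0 with hy | hy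
  · simp [← sub_eq_zero.1 hy]
  have hinv : φ (1 - x) * φ⁻¹ (1 - x) = 1 := by
    rw [MulChar.inv_apply', ← map_mul, mul_inv_cancel₀ hy, map_one]
  have hfactor : (φ x - 1) * (φ (1 - x) + φ⁻¹ (1 - x) - 2) =
      (φ x - 1) * (φ (1 - x) - 1) ^ 2 * φ⁻¹ (1 - x) := by
    linear_combination (φ x - 1) * (2 - φ (1 - x)) * hinv
  rw [hfactor, pow_succ' c 2]
  exact (mul_dvd_mul (hc x hx) (pow_dvd_pow_of_dvd (hc _ hy) 2)).mul_right _

end JacobiSum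

section QuadraticCharacter

variable {F R : Type*} [Field F] [CommRing R]

lemma ringChar_ne_two_of_even_orderOf [Finite F] {χ : MulChar F R} (hχ : Even (orderOf χ)) :
    ringChar F ≠ 2 := by
  have := Fintype.ofFinite F
  intro h
  have hcard := FiniteField.even_card_of_char_two h
  have hdvd := hχ.two_dvd.trans χ.orderOf_dvd_card_sub_one
  have := Fintype.one_lt_card (α := F)
  lia

lemma orderOf_eq_orderOf_apply_generator {g : Fˣ} (hg : ∀ x, x ∈ Subgroup.zpowers g)
    (χ : MulChar F R) : orderOf χ = orderOf (χ g) := by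
  rw [orderOf_eq_orderOf_iff]
  intro n
  rw [MulChar.eq_iff hg, MulChar.pow_apply_coe, MulChar.one_apply_coe]

lemma two_ne_zero_of_even_orderOf [Finite F] {χ : MulChar F R} (hχ : Even (orderOf χ)) :
    (2 : F) ≠ 0 :=
  Ring.two_ne_zero (ringChar_ne_two_of_even_orderOf hχ)

lemma four_ne_zero_of_even_orderOf [Finite F] {χ : MulChar F R} (hχ : Even (orderOf χ)) :
    (4 : F) ≠ 0 := by
  rw [show (4 : F) = 2 ^ 2 by norm_num]
  exact pow_ne_zero 2 (two_ne_zero_of_even_orderOf hχ)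

variable [IsDomain R]

lemma apply_generator_eq_neg_one {ρ : MulChar F R} (hρ : orderOf ρ = 2) {g : Fˣ}
    (hg : ∀ x, x ∈ Subgroup.zpowers g) : ρ g = -1 :=
  IsPrimitiveRoot.eq_neg_one_of_two_right <|
    hρ ▸ orderOf_eq_orderOf_apply_generator hg ρ ▸ IsPrimitiveRoot.orderOf (ρ g)

variable [Fintype F]

lemma eq_quadraticChar_of_orderOf_eq_two [DecidableEq F] {ρ : MulChar F R} (hρ : orderOf ρ = 2) :
    ρ = (quadraticChar F).ringHomComp (Int.castRingHom R) := by
  have hF : ringChar F ≠ 2 := ringChar_ne_two_of_even_orderOf (hρ ▸ even_two)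
  obtain ⟨g, hg⟩ := IsCyclic.exists_generator (α := Fˣ)
  have hquad : orderOf (quadraticChar F) = 2 :=
    orderOf_eq_prime (quadraticChar_isQuadratic F).sq_eq_one (quadraticChar_ne_one hF)
  rw [MulChar.eq_iff hg, apply_generator_eq_neg_one hρ hg, MulChar.ringHomComp_apply,
    apply_generator_eq_neg_one hquad hg, map_neg, map_one]

lemma sum_comp_sq {ρ : MulChar F R} (hρ : orderOf ρ = 2) (f : F → R) :
    ∑ s, f (s ^ 2) = ∑ y, (ρ y + 1) * f y := by
  classical
  rw [← sum_fiberwise' univ (· ^ 2) f]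
  refine sum_congr rfl fun y _ ↦ ?_
  have hcard := quadraticChar_card_sqrts (ringChar_ne_two_of_even_orderOf (hρ ▸ even_two)) y
  rw [Set.toFinset_ofPred] at hcard
  rw [sum_const, nsmul_eq_mul, eq_quadraticChar_of_orderOf_eq_two hρ, MulChar.ringHomComp_apply,
    ← Int.cast_natCast, hcard]
  simp

-- Count square roots of `1 - x`, then substitute `s = 1 - 2 t` in `1 - s ^ 2`.
lemma jacobiSum_orderOf_two {φ ρ : MulChar F R} (hφ : φ ≠ 1) (hρ : orderOf ρ = 2) :
    jacobiSum φ ρ = φ 4 * jacobiSum φ φ := by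
  have h2 : (2 : F) ≠ 0 := two_ne_zero_of_even_orderOf (hρ ▸ even_two : Even (orderOf ρ))
  calc jacobiSum φ ρ
    _ = ∑ y, ρ y * φ (1 - y) + ∑ y, φ (1 - y) := by
      rw [jacobiSum_comm, sum_apply_one_sub_eq_zero hφ, add_zero, jacobiSum]
    _ = ∑ s, φ (1 - s ^ 2) := by
      simp only [sum_comp_sq hρ fun y ↦ φ (1 - y), add_mul, one_mul, sum_add_distrib]
    _ = ∑ t, φ (1 - (1 - 2 * t) ^ 2) :=
      (((Equiv.mulLeft₀ 2 h2).trans (Equiv.subLeft 1)).sum_comp fun s ↦ φ (1 - s ^ 2)).symm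
    _ = φ 4 * jacobiSum φ φ := by
      rw [jacobiSum, mul_sum]
      refine sum_congr rfl fun t _ ↦ ?_
      rw [← map_mul, ← map_mul]
      ring_nf

end QuadraticCharacter

section Congruences

variable {F R : Type*} [Field F] [CommRing R] [IsDomain R]

lemma sub_one_dvd_apply_sub_one [Finite F] {n : ℕ} [NeZero n] {φ : MulChar F R} (hφ : φ ^ n = 1)
    {z : R} (hz : IsPrimitiveRoot z n) {x : F} (hx : x ≠ 0) : z - 1 ∣ φ x - 1 := by
  obtain ⟨k, -, hk⟩ := MulChar.exists_apply_eq_pow hφ hz hx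
  exact hk ▸ sub_one_dvd_pow_sub_one z k

lemma sub_one_pow_dvd_pow_apply_sub_one [Finite F] {m n : ℕ} [NeZero (m * n)]
    {θ : MulChar F R} (hθ : θ ^ (m * n) = 1) {z : R} (hz : IsPrimitiveRoot z (m * n)) {x : F}
    (hx : x ≠ 0) : (z - 1) ^ n ∣ (θ ^ n) x - 1 := by
  obtain ⟨k, -, hk⟩ := MulChar.exists_apply_eq_pow hθ hz hx
  rw [MulChar.pow_apply' _ (right_ne_zero_of_mul (NeZero.ne (m * n))), hk, ← pow_mul, mul_comm,
    pow_mul]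
  exact (sub_one_pow_dvd_pow_sub_one_of_isPrimitiveRoot (NeZero.pos _) hz).trans
    (sub_one_dvd_pow_sub_one _ k)

lemma sub_one_pow_dvd_zpow_mul_apply_sub_one [Finite F] {m n : ℕ} [NeZero (m * n)]
    {χ : MulChar F R} (hχ : χ ^ (2 * (m * n)) = 1) {z : R} (hz : IsPrimitiveRoot z (m * n)) {k : ℤ}
    (hk : Even k) {x : F} (hx : x ≠ 0) : (z - 1) ^ n ∣ (χ ^ (k * n)) x - 1 := by
  have hroot : (χ ^ k) ^ (m * n) = 1 := by
    obtain ⟨j, rfl⟩ := hk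
    rw [← zpow_natCast, ← zpow_mul,
      show (j + j) * (m * n : ℕ) = (2 * (m * n) : ℕ) * j by push_cast; ring, zpow_mul,
      zpow_natCast, hχ, one_zpow]
  rw [zpow_mul, zpow_natCast]
  exact sub_one_pow_dvd_pow_apply_sub_one hroot hz hx

lemma apply_mem_adjoin_of_orderOf_eq_two_mul [Finite F] {n : ℕ} (hn : Odd n) {χ : MulChar F R}
    (hχ : orderOf χ = 2 * n) {z : R} (hz : IsPrimitiveRoot z n) (x : F) :
    χ x ∈ Algebra.adjoin ℤ {z} := by
  rcases eq_or_ne x 0 with rfl | hx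
  · exact χ.map_zero ▸ zero_mem _
  · refine mem_adjoin_of_pow_two_mul_eq_one hn hz ?_
    rw [← hχ, ← MulChar.pow_apply' _ χ.orderOf_pos.ne', pow_orderOf_eq_one,
      MulChar.one_apply hx.isUnit]

variable [Fintype F]

lemma sub_one_pow_dvd_card_sub_one {n : ℕ} (hcard : n ∣ Fintype.card F - 1) {z : R}
    (hz : IsPrimitiveRoot z n) {k : ℕ} (hk : k < n) : (z - 1) ^ k ∣ (Fintype.card F : R) - 1 := by
  obtain ⟨y, -, hy⟩ := hz.self_sub_one_pow_dvd_order hk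
  have hcast := Nat.cast_dvd_cast (α := R) hcard
  rw [Nat.cast_pred Fintype.card_pos, hy] at hcast
  exact (dvd_mul_left _ _).trans hcast

lemma pow_three_dvd_jacobiSum_self_add_one {n : ℕ} (hn : Odd n) (hn3 : 3 < n)
    (hcard : n ∣ Fintype.card F - 1) {φ : MulChar F R} (hφn : φ ^ n = 1) (hφ : φ ≠ 1) {z : R}
    (hz : IsPrimitiveRoot z n) : (z - 1) ^ 3 ∣ jacobiSum φ φ + 1 := by
  have : NeZero n := ⟨hn.pos.ne'⟩
  have hself := pow_three_dvd_jacobiSum_self_sub hφ fun x hx ↦ sub_one_dvd_apply_sub_one hφn hz hx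
  rw [MulChar.val_neg_one_eq_one_of_odd_order hn hφn] at hself
  convert hself.sub ((sub_one_pow_dvd_card_sub_one hcard hz hn3).mul_left 2) using 1
  ring

lemma mul_jacobiSum_pow_eq {n : ℕ} (hn : Odd n) {χ : MulChar F R} (hχ : orderOf χ = 2 * n)
    (hφ : χ ^ (n + 1) ≠ 1) :
    χ (-1) * jacobiSum χ (χ ^ n) = χ⁻¹ 4 * jacobiSum (χ ^ (n + 1))⁻¹ (χ ^ (n + 1))⁻¹ := by
  have h2 : (2 : F) ≠ 0 := two_ne_zero_of_even_orderOf (hχ ▸ even_two_mul n)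
  have hρ : orderOf (χ ^ n) = 2 := by
    rw [orderOf_pow_of_dvd hn.pos.ne' (hχ ▸ dvd_mul_left n 2), hχ, Nat.mul_div_cancel _ hn.pos]
  have hρ4 : (χ ^ n)⁻¹ 4 = 1 := by
    rw [MulChar.inv_apply', show (4 : F)⁻¹ = 2⁻¹ ^ 2 by norm_num, map_pow,
      ← MulChar.pow_apply' _ two_ne_zero, ← hρ, pow_orderOf_eq_one,
      MulChar.one_apply (inv_ne_zero h2).isUnit]
  have hφ_neg_one : (χ ^ (n + 1)) (-1) = 1 := by
    rw [MulChar.pow_apply' _ n.succ_ne_zero, ← map_pow, Nat.succ_eq_add_one,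
      hn.add_one.neg_one_pow, map_one]
  calc χ (-1) * jacobiSum χ (χ ^ n)
    _ = (χ ^ (n + 1)) (-1) * jacobiSum (χ ^ (n + 1))⁻¹ (χ ^ n) := by
      rw [jacobiSum_eq_mul_jacobiSum_inv_mul, ← mul_assoc, ← MulChar.mul_apply, ← pow_succ']
    _ = (χ ^ (n + 1))⁻¹ 4 * jacobiSum (χ ^ (n + 1))⁻¹ (χ ^ (n + 1))⁻¹ := by
      rw [hφ_neg_one, one_mul, jacobiSum_orderOf_two (inv_ne_one.2 hφ) hρ]
    _ = _ := by rw [pow_succ, mul_inv_rev, MulChar.mul_apply, hρ4, mul_one]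

lemma pow_three_dvd_mul_jacobiSum_pow_add {n : ℕ} (hn : Odd n) (hn3 : 3 < n) {χ : MulChar F R}
    (hχ : orderOf χ = 2 * n) {z : R} (hz : IsPrimitiveRoot z n) :
    (z - 1) ^ 3 ∣ χ (-1) * jacobiSum χ (χ ^ n) + χ⁻¹ 4 := by
  have hcard : n ∣ Fintype.card F - 1 :=
    (hχ ▸ dvd_mul_left n 2).trans χ.orderOf_dvd_card_sub_one
  have hφ : χ ^ (n + 1) ≠ 1 := by
    rw [Ne, ← orderOf_dvd_iff_pow_eq_one, hχ]
    exact fun h ↦ by linarith [Nat.le_of_dvd n.succ_pos h]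
  have hφn : (χ ^ (n + 1)) ^ n = 1 := by
    rw [← pow_mul, ← orderOf_dvd_iff_pow_eq_one, hχ]
    exact mul_dvd_mul_right hn.add_one.two_dvd n
  rw [mul_jacobiSum_pow_eq hn hχ hφ, ← mul_add_one]
  exact (pow_three_dvd_jacobiSum_self_add_one hn hn3 hcard (by rw [inv_pow, hφn, inv_one])
    (inv_ne_one.2 hφ) hz).mul_left _

lemma pow_three_dvd_mul_jacobiSum_zpow_add {l : ℕ} (hl : Odd l) (hl1 : 1 < l) {χ : MulChar F R}
    (hχ : orderOf χ = 2 * l ^ 2) {z : R} (hz : IsPrimitiveRoot z (l ^ 2)) {d : ℤ} (hd : Odd d) :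
    (z - 1) ^ 3 ∣ χ (-1) * jacobiSum χ (χ ^ (d * l)) + (χ ^ (-(d * l + 1))) 4 := by
  have h2 : (2 : F) ≠ 0 := two_ne_zero_of_even_orderOf (hχ ▸ even_two_mul _)
  have hl3 : 3 ≤ l := by obtain ⟨k, rfl⟩ := hl; lia
  have : NeZero (l * l) := ⟨by positivity⟩
  have hdvd {k : ℤ} (hk : Even k) {x : F} (hx : x ≠ 0) : (z - 1) ^ 3 ∣ (χ ^ (k * l)) x - 1 :=
    (pow_dvd_pow _ hl3).trans <| sub_one_pow_dvd_zpow_mul_apply_sub_one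
      (by rw [← sq, ← hχ, pow_orderOf_eq_one]) (sq l ▸ hz) hk hx
  have hsplit : χ ^ (d * l) = χ ^ (l ^ 2) * χ ^ ((d - l) * l) := by
    rw [← zpow_natCast, ← zpow_add]
    push_cast
    ring_nf
  have hjacobi : (z - 1) ^ 3 ∣ jacobiSum χ (χ ^ (d * l)) - jacobiSum χ (χ ^ (l ^ 2)) :=
    hsplit ▸ dvd_jacobiSum_mul_sub_jacobiSum _ _
      fun x hx ↦ hdvd (hd.sub_odd (Int.odd_coe_nat l |>.2 hl)) hx
  have hfour : (χ ^ (-(d * l + 1))) 4 = (χ ^ (-2 * d * l)) 2 * χ⁻¹ 4 := by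
    rw [show -2 * d * l = -(d * l) * (2 : ℕ) by push_cast; ring, zpow_mul, zpow_natCast,
      MulChar.pow_apply' _ two_ne_zero, ← map_pow, show (2 : F) ^ 2 = 4 by norm_num,
      ← MulChar.mul_apply, neg_add, zpow_add, zpow_neg_one]
  have hbase := pow_three_dvd_mul_jacobiSum_pow_add hl.pow (by nlinarith) hχ hz
  have hroot := hdvd (k := -2 * d) (by simp) h2
  rw [hfour]
  convert hbase.add ((hjacobi.mul_left (χ (-1))).add (hroot.mul_right (χ⁻¹ 4))) using 1
  ring

lemma exists_pow_dvd_mul_jacobiSum_zpow_sub {l : ℕ} (hl : Odd l) (hl1 : 1 < l) {χ : MulChar F R}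
    (hχ : orderOf χ = 2 * l ^ 2) {z : R} (hz : IsPrimitiveRoot z (l ^ 2))
    (hgen : Algebra.adjoin ℤ {z} = ⊤) {d : ℤ} (hd : Odd d) :
    ∃ a : ℕ → ℤ, (z - 1) ^ (l + 1) ∣ χ (-1) * jacobiSum χ (χ ^ (d * l)) -
      (χ ^ (-(d * l + 1))) 4 * (-1 + ∑ i ∈ Icc 3 l, (a i : R) * (z - 1) ^ i) := by
  have h4 : (4 : F) ≠ 0 := four_ne_zero_of_even_orderOf (hχ ▸ even_two_mul _)
  have hunit : (χ ^ (-(d * l + 1))) 4 * (χ ^ (d * l + 1)) 4 = 1 := by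
    rw [← MulChar.mul_apply, ← zpow_add, neg_add_cancel, zpow_zero, MulChar.one_apply h4.isUnit]
  obtain ⟨a, ha⟩ := exists_pow_dvd_sub_sum_Icc (adjoin_sub_one_eq_top hgen)
    ((pow_three_dvd_mul_jacobiSum_zpow_add hl hl1 hχ hz hd).mul_left ((χ ^ (d * l + 1)) 4)) l
  refine ⟨a, ?_⟩
  convert ha.mul_left ((χ ^ (-(d * l + 1))) 4) using 1
  simp only [eq_intCast]
  linear_combination -(χ (-1) * jacobiSum χ (χ ^ (d * l)) + (χ ^ (-(d * l + 1))) 4) * hunit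

end Congruences

section Descent

lemma exists_ringHomComp_algebraMap_eq {M A B : Type*} [CommMonoid M] [CommRing A] [CommRing B]
    [Algebra A B] (S : Subalgebra A B) {χ : MulChar M B} (hχ : ∀ x, χ x ∈ S) :
    ∃ X : MulChar M S, X.ringHomComp (algebraMap S B) = χ :=
  ⟨{ χ.toMonoidHom.codRestrict S hχ with
      map_nonunit' _ hx := Subtype.ext (χ.map_nonunit hx) }, MulChar.ext' fun _ ↦ rfl⟩

lemma orderOf_ringHomComp {M A B : Type*} [CommMonoid M] [CommRing A] [CommRing B] {f : A →+* B}
    (hf : Function.Injective f) (χ : MulChar M A) : orderOf (χ.ringHomComp f) = orderOf χ :=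
  orderOf_injective (MulChar.ringHomCompHom f) (MulChar.injective_ringHomComp hf) χ

lemma adjoin_singleton_mk_self_eq_top {A B : Type*} [CommRing A] [CommRing B] [Algebra A B]
    (z : B) :
    Algebra.adjoin A {(⟨z, Algebra.self_mem_adjoin_singleton A z⟩ : Algebra.adjoin A {z})} = ⊤ := by
  rw [← Algebra.adjoin_adjoin_coe_preimage (R := A) (s := {z})]
  congr 1
  ext x
  simp [Subtype.ext_iff]

lemma exists_mem_adjoin_mul_jacobiSum_zpow_sub_eq {F R : Type*} [Field F] [Fintype F] [CommRing R]
    [IsDomain R] {l : ℕ} (hl : Odd l) (hl1 : 1 < l) {χ : MulChar F R} (hχ : orderOf χ = 2 * l ^ 2)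
    {z : R} (hz : IsPrimitiveRoot z (l ^ 2)) {d : ℤ} (hd : Odd d) :
    ∃ a : ℕ → ℤ, ∃ y ∈ Algebra.adjoin ℤ {z}, χ (-1) * jacobiSum χ (χ ^ (d * l)) -
      (χ ^ (-(d * l + 1))) 4 * (-1 + ∑ i ∈ Icc 3 l, (a i : R) * (z - 1) ^ i) =
        (z - 1) ^ (l + 1) * y := by
  let S := Algebra.adjoin ℤ {z}
  let zS : S := ⟨z, Algebra.self_mem_adjoin_singleton ℤ z⟩
  have hinj : Function.Injective (algebraMap S R) := Subtype.val_injective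
  have hzS : IsPrimitiveRoot zS (l ^ 2) :=
    IsPrimitiveRoot.of_map_of_injective (f := algebraMap S R) hz hinj
  obtain ⟨X, rfl⟩ := exists_ringHomComp_algebraMap_eq S
    (apply_mem_adjoin_of_orderOf_eq_two_mul hl.pow hχ hz)
  rw [orderOf_ringHomComp hinj] at hχ
  obtain ⟨a, y, hy⟩ := exists_pow_dvd_mul_jacobiSum_zpow_sub hl hl1 hχ hzS
    (adjoin_singleton_mk_self_eq_top z) hd
  refine ⟨a, y, y.2, ?_⟩
  rw [MulChar.ringHomComp_zpow, MulChar.ringHomComp_zpow, jacobiSum_ringHomComp]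
  simpa using congrArg (algebraMap S R) hy

end Descent

section PowerCharacter

variable {F : Type*} [Field F]

lemma mulChar_map_zpow {K : Type*} [Field K] (χ : MulChar F K) (x : F) (i : ℤ) :
    χ (x ^ i) = χ x ^ i :=
  map_zpow₀ χ.toMonoidWithZeroHom x i

lemma zpow_apply_of_ne_zero {K : Type*} [Field K] (χ : MulChar F K) (i : ℤ) {x : F} (hx : x ≠ 0) :
    (χ ^ i) x = χ x ^ i := by
  lift x to Fˣ using hx.isUnit
  rw [MulChar.zpow_apply_coe, Units.val_zpow_eq_zpow_val, mulChar_map_zpow]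

variable [DecidableEq F] (χ : MulChar F ℂ)

lemma charPow_eq_zpow_apply (i : ℤ) (v : F) : charPow χ i v = (χ ^ i) v := by
  rcases eq_or_ne v 0 with rfl | hv
  · rw [charPow, if_pos rfl, MulChar.map_zero]
  · rw [charPow, if_neg hv, zpow_apply_of_ne_zero χ i hv]

lemma jSum_eq_mul_jacobiSum [Fintype F] (i j : ℤ) :
    jSum χ i j = (χ ^ i) (-1) * jacobiSum (χ ^ i) (χ ^ j) := by
  rw [jSum, ← Equiv.sum_comp (Equiv.neg F), jacobiSum, mul_sum]
  refine sum_congr rfl fun x _ ↦ ?_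
  rw [charPow_eq_zpow_apply, charPow_eq_zpow_apply, Equiv.neg_apply, neg_add_eq_sub, ← mul_assoc,
    ← map_mul, neg_one_mul]

end PowerCharacter

lemma exists_mulChar_coe_eq_and_orderOf_eq {F R : Type*} [Field F] [CommRing R] [IsDomain R]
    {f : F → R} (hzero : f 0 = 0) (hmul : ∀ x y, f (x * y) = f x * f y) {γ : F} (hfγ : f γ ≠ 0)
    (hγ : ∀ x, x ≠ 0 → ∃ k : ℕ, γ ^ k = x) :
    ∃ χ : MulChar F R, ⇑χ = f ∧ orderOf χ = orderOf (f γ) := by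
  have hone : f 1 = 1 := mul_right_cancel₀ hfγ (by rw [← hmul, one_mul, one_mul])
  have hγ0 : γ ≠ 0 := fun h ↦ hfγ (h ▸ hzero)
  have hgen (x : Fˣ) : x ∈ Subgroup.zpowers (Units.mk0 γ hγ0) := by
    obtain ⟨k, hk⟩ := hγ x x.ne_zero
    exact ⟨k, Units.ext (by simpa using hk)⟩
  let χ : MulChar F R :=
    { toFun := f
      map_one' := hone
      map_mul' := hmul
      map_nonunit' x hx := by rwa [isUnit_iff_ne_zero.not_left.1 hx] }
  exact ⟨χ, rfl, orderOf_eq_orderOf_apply_generator hgen χ⟩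

lemma exists_isIntegral_jSum_sub_div {F : Type*} [Field F] [Fintype F] [DecidableEq F]
    {l : ℕ} (hl : Odd l) (hl1 : 1 < l) {χ : MulChar F ℂ} (hχ : orderOf χ = 2 * l ^ 2) {z : ℂ}
    (hz : IsPrimitiveRoot z (l ^ 2)) {d : ℤ} (hd : Odd d) :
    ∃ a : ℕ → ℤ, IsIntegral ℤ ((jSum χ 1 (d * l) -
      χ 4 ^ (-(d * l + 1)) * (-1 + ∑ i ∈ Icc 3 l, (a i : ℂ) * (z - 1) ^ i)) /
        (1 - z) ^ (l + 1)) := by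
  have h4 : (4 : F) ≠ 0 := four_ne_zero_of_even_orderOf (hχ ▸ even_two_mul _)
  have hz1 : z - 1 ≠ 0 := sub_ne_zero.2 (hz.ne_one (Nat.one_lt_pow two_ne_zero hl1))
  obtain ⟨a, y, hymem, hy⟩ := exists_mem_adjoin_mul_jacobiSum_zpow_sub_eq hl hl1 hχ hz hd
  have hyint : IsIntegral ℤ y := adjoin_le_integralClosure (hz.isIntegral (by positivity)) hymem
  rw [zpow_apply_of_ne_zero χ _ h4] at hy
  refine ⟨a, ?_⟩
  rwa [← hl.add_one.neg_pow, neg_sub, jSum_eq_mul_jacobiSum, zpow_one, hy,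
    mul_div_cancel_left₀ y (pow_ne_zero _ hz1)]

theorem jacobiSum_dl_congruence_full_general {F : Type*} [Field F] [Fintype F] [DecidableEq F]
    {l : ℕ} (hl : Odd l) (hl1 : 1 < l) {γ : F} (hγ : ∀ x : F, x ≠ 0 → ∃ k : ℕ, γ ^ k = x)
    {ζ : ℂ} (hζ : IsPrimitiveRoot ζ (2 * l ^ 2)) {χ : F → ℂ} (hχ0 : χ 0 = 0) (hχγ : χ γ = ζ)
    (hχmul : ∀ x y : F, χ (x * y) = χ x * χ y) {w : ℤ} (hw : γ ^ w = 2) {d : ℤ} (hd : Odd d) :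
    ∃ a : ℕ → ℤ, IsIntegral ℤ ((jSum χ 1 (d * l) - (ζ ^ 2) ^ (-(w * (d * l + 1))) *
      (-1 + ∑ i ∈ Icc 3 l, (a i : ℂ) * (ζ ^ 2 - 1) ^ i)) / (1 - ζ ^ 2) ^ (l + 1)) := by
  have hl2 : 2 * l ^ 2 ≠ 0 := by positivity
  obtain ⟨X, rfl, hX⟩ :=
    exists_mulChar_coe_eq_and_orderOf_eq hχ0 hχmul (hχγ ▸ hζ.ne_zero hl2) hγ
  rw [hχγ, ← hζ.eq_orderOf] at hX
  have hX4 : X 4 = (ζ ^ 2) ^ w := by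
    rw [show (4 : F) = 2 ^ 2 by norm_num, ← hw, map_pow, mulChar_map_zpow, hχγ]
    exact (zpow_comm ζ 2 w).symm
  obtain ⟨a, ha⟩ :=
    exists_isIntegral_jSum_sub_div hl hl1 hX (hζ.pow (Nat.pos_of_ne_zero hl2) rfl) hd
  rw [hX4, ← zpow_mul, mul_neg] at ha
  exact ⟨a, ha⟩

theorem jacobiSum_dl_congruence_full {F : Type*} [Field F] [Fintype F] [DecidableEq F]
    (l p r q : ℕ) (hl : l.Prime) (hl3 : 3 ≤ l) (hp : p.Prime) (hr : 0 < r)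
    (hq : q = p ^ r) (hql : q % (2 * l ^ 2) = 1) (hcard : Fintype.card F = q)
    (γ : F) (hγ : ∀ x : F, x ≠ 0 → ∃ k : ℕ, γ ^ k = x)
    (ζ : ℂ) (hζ : ζ = Complex.exp (2 * Real.pi * Complex.I / ((2 * l ^ 2 : ℕ) : ℂ)))
    (ζl : ℂ) (hζl : ζl = ζ ^ 2)
    (χ : F → ℂ) (hχ0 : χ 0 = 0) (hχγ : χ γ = ζ)
    (hχmul : ∀ x y : F, χ (x * y) = χ x * χ y)
    (w : ℤ) (hw : γ ^ w = 2)
    (d : ℤ) (hd1 : 1 ≤ d) (hd2 : d ≤ 2 * (l : ℤ) - 1) (hdodd : Odd d) (hdl : d ≠ (l : ℤ)) :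
    ∃ a b : ℕ → ℤ,
      IsIntegral ℤ ((jSum χ 1 (d * l) +
          ζl ^ (-(w * (d * l + 1))) *
            (-1 + ∑ i ∈ Finset.Icc 3 l, (a i : ℂ) * (ζl - 1) ^ i) *
            (-1 + ∑ i ∈ Finset.Icc 3 l, (b i : ℂ) * (ζl ^ ((-1 - d * (l : ℤ)) / 2) - 1) ^ i)) /
        (1 - ζl) ^ (l + 1)) := by
  obtain ⟨a, ha⟩ := jacobiSum_dl_congruence_full_general (hl.odd_of_ne_two (by lia)) hl.one_lt hγ
    (hζ ▸ isPrimitiveRoot_exp _ (by positivity)) hχ0 hχγ hχmul hw hdodd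
  exact ⟨a, 0, by simpa [hζl, sub_eq_add_neg] using ha⟩
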